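/- Let p be a prime not dividing 2·3 (i.e., p > 3), and consider the polynomial f(x) = x⁹ − x over 𝔽_p. If p ∤ 2 and p ∤ 3 and additionally 8 ∣ p − 1 (so that 9x⁸ − 1 has 8 distinct roots), then f is a Morse polynomial in the sense that: (a) its derivative 9x⁸ − 1 has 8 distinct roots β₁, …, β₈ in an algebraic closure, and (b) the critical values f(β_i) = −(8/9)β_i are pairwise distinct. -/

import Mathlib

open Polynomial
open scoped Classical

/-- For a prime `p` not dividing `2` or `3` with `8 ∣ p - 1`, the polynomial
`f(x) = x⁹ - x` over `𝔽_p` is Morse: (a) its derivative `9x⁸ - 1` has `8` distinct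
roots in an algebraic closure, and (b) the critical values `f(β) = -(8/9)β` at the
critical points are pairwise distinct. -/
theorem stmt_9 (p : ℕ) [hp : Fact p.Prime] (h2 : ¬ (p ∣ 2)) (h3 : ¬ (p ∣ 3))
    (h8 : 8 ∣ p - 1) :
    ((C (9 : AlgebraicClosure (ZMod p)) * X ^ 8 - 1).roots.toFinset.card = 8 ∧
        (C (9 : AlgebraicClosure (ZMod p)) * X ^ 8 - 1).roots.card = 8) ∧
      (∀ β γ : AlgebraicClosure (ZMod p),
        9 * β ^ 8 - 1 = 0 → 9 * γ ^ 8 - 1 = 0 →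
          β ^ 9 - β = γ ^ 9 - γ → β = γ) ∧
      (∀ β : AlgebraicClosure (ZMod p), 9 * β ^ 8 - 1 = 0 →
          β ^ 9 - β = -(8 / 9) * β) := by
  have e2 : (2 : AlgebraicClosure (ZMod p)) ≠ 0 := by
    intro h
    exact h2 ((CharP.cast_eq_zero_iff (AlgebraicClosure (ZMod p)) p 2).1 (by exact_mod_cast h))
  have e3 : (3 : AlgebraicClosure (ZMod p)) ≠ 0 := by
    intro h
    exact h3 ((CharP.cast_eq_zero_iff (AlgebraicClosure (ZMod p)) p 3).1 (by exact_mod_cast h))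
  have e8 : (8 : AlgebraicClosure (ZMod p)) ≠ 0 := by
    have : (8 : AlgebraicClosure (ZMod p)) = 2 ^ 3 := by norm_num
    rw [this]; exact pow_ne_zero _ e2
  have e9 : (9 : AlgebraicClosure (ZMod p)) ≠ 0 := by
    have : (9 : AlgebraicClosure (ZMod p)) = 3 ^ 2 := by norm_num
    rw [this]; exact pow_ne_zero _ e3
  have hdeg : (C (9 : AlgebraicClosure (ZMod p)) * X ^ 8 - 1).natDegree = 8 := by
    compute_degree!
  have hcard : (C (9 : AlgebraicClosure (ZMod p)) * X ^ 8 - 1).roots.card = 8 := by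
    rw [← (IsAlgClosed.splits _).natDegree_eq_card_roots, hdeg]
  have hsep : (C (9 : AlgebraicClosure (ZMod p)) * X ^ 8 - 1).Separable := by
    refine ⟨-1, C (8⁻¹) * X, ?_⟩
    have h : (C (8⁻¹ : AlgebraicClosure (ZMod p))) * 8 = 1 := by
      have : (8 : (AlgebraicClosure (ZMod p))[X]) = C 8 := rfl
      rw [this, ← C_mul, inv_mul_cancel₀ e8, C_1]
    simp only [derivative_sub, derivative_mul, derivative_C, derivative_X_pow, derivative_one]
    simp only [Nat.cast_ofNat, map_ofNat]
    linear_combination (9 * X ^ 8) * h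
  have hval : ∀ β : AlgebraicClosure (ZMod p), 9 * β ^ 8 - 1 = 0 →
      β ^ 9 - β = -(8 / 9) * β := by
    intro β h
    field_simp
    linear_combination β * h
  refine ⟨⟨?_, hcard⟩, ?_, hval⟩
  · rw [Multiset.toFinset_card_of_nodup (nodup_roots hsep), hcard]
  · intro β γ hβ hγ h
    rw [hval β hβ, hval γ hγ] at h
    exact mul_left_cancel₀ (neg_ne_zero.2 (div_ne_zero e8 e9)) h
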